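/- Let p ∈ (1,2), n ∈ ℕ, and a_i = (n/i)^{1/p} for i = 1,…,n. Then there exist constants c_1(p), c_2(p) > 0 depending only on p such that for all x ∈ ℝ^n: c_1(p)·‖x‖_p ≤ (1/n!)∑_{π ∈ S_n} (∑_{i=1}^n |x_i a_{π(i)}|^2)^{1/2} ≤ c_2(p)·‖x‖_p. -/

import Mathlib

open Finset

open MeasureTheory Set in
theorem integrableOn_Ioi_min_rpow {α β : ℝ} (hα : α < 1) (hβ : 1 < β) :
    IntegrableOn (fun s : ℝ => min (s ^ (-α)) (s ^ (-β))) (Ioi 0) := by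
  rw [← Ioc_union_Ioi_eq_Ioi (zero_le_one' ℝ)]
  have hmeas : Measurable (fun s : ℝ => min (s ^ (-α)) (s ^ (-β))) := by fun_prop
  have hbound : ∀ s : ℝ, 0 < s → 0 ≤ min (s ^ (-α)) (s ^ (-β)) := fun s hs => by positivity
  refine IntegrableOn.union ?_ ?_
  · have h : IntegrableOn (fun s : ℝ => s ^ (-α)) (Ioc 0 1) :=
      (intervalIntegrable_iff_integrableOn_Ioc_of_le zero_le_one).1
        (intervalIntegral.intervalIntegrable_rpow' (by linarith))
    refine Integrable.mono' h hmeas.aestronglyMeasurable ?_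
    filter_upwards [ae_restrict_mem measurableSet_Ioc] with s hs
    rw [Real.norm_of_nonneg (hbound s hs.1)]
    exact min_le_left _ _
  · have h : IntegrableOn (fun s : ℝ => s ^ (-β)) (Ioi 1) :=
      integrableOn_Ioi_rpow_of_lt (by linarith) one_pos
    refine Integrable.mono' h hmeas.aestronglyMeasurable ?_
    filter_upwards [ae_restrict_mem measurableSet_Ioi] with s hs
    rw [Real.norm_of_nonneg (hbound s (one_pos.trans hs))]
    exact min_le_right _ _

open MeasureTheory Set in
theorem AntitoneOn.sum_range_le_integral_Ioi {f : ℝ → ℝ} (hf : AntitoneOn f (Ioi 0))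
    (hpos : ∀ s, 0 < s → 0 ≤ f s) (hint : IntegrableOn f (Ioi 0)) (n : ℕ) :
    ∑ i ∈ Finset.range n, f (i + 1) ≤ ∫ s in Ioi 0, f s := by
  have hI : ∀ a b : ℕ, a ≤ b → IntegrableOn f (Ioc (a : ℝ) b) := fun a b _ =>
    hint.mono_set fun s hs => (Nat.cast_nonneg a).trans_lt hs.1
  have key : ∑ i ∈ Finset.range n, f (i + 1) ≤ ∫ s in (0 : ℝ)..n, f s := by
    have hadj := intervalIntegral.sum_integral_adjacent_intervals (f := f) (μ := volume)
      (a := fun k : ℕ => (k : ℝ)) (n := n) fun k _ =>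
        (intervalIntegrable_iff_integrableOn_Ioc_of_le (by simp)).2 (hI k (k + 1) (by simp))
    rw [Nat.cast_zero] at hadj
    rw [← hadj]
    refine Finset.sum_le_sum fun i _ => ?_
    rw [intervalIntegral.integral_of_le (by simp)]
    have hconst : ∫ _ in Ioc (i : ℝ) (i + 1 : ℕ), f (i + 1) = f (i + 1) := by simp
    rw [← hconst]
    refine setIntegral_mono_on (by simp) (hI i (i + 1) (by simp)) measurableSet_Ioc fun s hs => ?_
    have h0 : (0 : ℝ) < s := (Nat.cast_nonneg i).trans_lt hs.1
    exact hf h0 (mem_Ioi.2 (by positivity)) (by exact_mod_cast hs.2)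
  refine key.trans ?_
  rw [intervalIntegral.integral_of_le (by simp)]
  refine setIntegral_mono_set hint ?_ Set.Ioc_subset_Ioi_self.eventuallyLE
  filter_upwards [ae_restrict_mem measurableSet_Ioi] with s hs using hpos s hs

theorem exists_sum_min_rpow_le {p : ℝ} (hp1 : 1 < p) (hp2 : p < 2) :
    ∃ C : ℝ, 0 < C ∧ ∀ (n : ℕ) (u : ℝ), 0 ≤ u →
      ∑ j : Fin n, min ((u / ((j : ℕ) + 1)) ^ (1 / p)) (((u / ((j : ℕ) + 1)) ^ (1 / p)) ^ 2) ≤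
        C * u := by
  have hp0 : 0 < p := by linarith
  set f : ℝ → ℝ := fun s => min (s ^ (-(1 / p))) (s ^ (-(2 / p))) with hf
  have hint : MeasureTheory.IntegrableOn f (Set.Ioi 0) :=
    integrableOn_Ioi_min_rpow (by rw [div_lt_one hp0]; exact hp1) (by rwa [one_lt_div hp0])
  have hpos : ∀ s, 0 < s → 0 ≤ f s := fun s hs => by positivity
  have hanti : AntitoneOn f (Set.Ioi 0) := fun s hs t _ hst =>
    min_le_min (Real.rpow_le_rpow_of_nonpos hs hst (neg_nonpos.2 (by positivity)))
      (Real.rpow_le_rpow_of_nonpos hs hst (neg_nonpos.2 (by positivity)))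
  have hI0 : 0 ≤ ∫ s in Set.Ioi 0, f s :=
    MeasureTheory.setIntegral_nonneg measurableSet_Ioi hpos
  refine ⟨(∫ s in Set.Ioi 0, f s) + 1, by positivity, fun n u hu => ?_⟩
  rcases hu.eq_or_lt with rfl | hu
  · simp [hp0.ne']
  have hterm : ∀ j : ℕ, min ((u / (j + 1)) ^ (1 / p)) (((u / (j + 1)) ^ (1 / p)) ^ 2) =
      f (u⁻¹ * ((j : ℝ) + 1)) := fun j => by
    have h0 : 0 < u / ((j : ℝ) + 1) := by positivity
    have hinv : u⁻¹ * ((j : ℝ) + 1) = (u / (j + 1))⁻¹ := by rw [inv_div]; ring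
    have hpow : ((u / ((j : ℝ) + 1)) ^ (1 / p)) ^ 2 = (u / (j + 1)) ^ (2 / p) := by
      rw [← Real.rpow_natCast, ← Real.rpow_mul h0.le]
      congr 1
      push_cast
      ring
    simp only [hf]
    rw [hpow, hinv, Real.rpow_neg (by positivity), Real.rpow_neg (by positivity),
      Real.inv_rpow h0.le, Real.inv_rpow h0.le, inv_inv, inv_inv]
  have hui : 0 < u⁻¹ := inv_pos.2 hu
  calc ∑ j : Fin n, min ((u / ((j : ℕ) + 1)) ^ (1 / p)) (((u / ((j : ℕ) + 1)) ^ (1 / p)) ^ 2)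
      = ∑ j ∈ range n, f (u⁻¹ * ((j : ℝ) + 1)) := by
        rw [← Fin.sum_univ_eq_sum_range (fun j : ℕ => f (u⁻¹ * ((j : ℝ) + 1)))]
        exact Finset.sum_congr rfl fun j _ => hterm j
    _ ≤ ∫ s in Set.Ioi 0, f (u⁻¹ * s) := by
        refine AntitoneOn.sum_range_le_integral_Ioi (f := fun s => f (u⁻¹ * s)) ?_ ?_ ?_ n
        · exact fun s hs t ht hst => hanti (mul_pos hui hs) (mul_pos hui ht)
            (mul_le_mul_of_nonneg_left hst hui.le)
        · exact fun s hs => hpos _ (mul_pos hui hs)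
        · rw [MeasureTheory.integrableOn_Ioi_comp_mul_left_iff f 0 hui, mul_zero]
          exact hint
    _ = u * ∫ s in Set.Ioi 0, f s := by
        rw [MeasureTheory.integral_comp_mul_left_Ioi f 0 hui, mul_zero, inv_inv, smul_eq_mul]
    _ ≤ ((∫ s in Set.Ioi 0, f s) + 1) * u := by linarith

theorem sqrt_sum_sq_le_one_add_sum_min {ι : Type*} (s : Finset ι) (z : ι → ℝ)
    (hz : ∀ i, 0 ≤ z i) :
    √(∑ i ∈ s, z i ^ 2) ≤ 1 + ∑ i ∈ s, min (z i) (z i ^ 2) := by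
  classical
  have hmin : ∀ i, 0 ≤ min (z i) (z i ^ 2) := fun i => le_min (hz i) (sq_nonneg _)
  refine Real.sqrt_le_iff.2 ⟨by have := Finset.sum_nonneg fun i (_ : i ∈ s) => hmin i; linarith, ?_⟩
  induction s using Finset.induction_on with
  | empty => simp
  | insert i s hi ih =>
    rw [Finset.sum_insert hi, Finset.sum_insert hi]
    have hS := Finset.sum_nonneg fun i (_ : i ∈ s) => hmin i
    have h0 := hmin i
    have hzi := hz i
    have hstep : z i ^ 2 ≤ min (z i) (z i ^ 2) ^ 2 + 2 * min (z i) (z i ^ 2) := by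
      rcases min_cases (z i) (z i ^ 2) with h | h <;> rw [h.1] <;> nlinarith [sq_nonneg (z i ^ 2)]
    nlinarith [mul_nonneg hS h0]

section PermAverage

variable {ι : Type*} [Fintype ι] [DecidableEq ι]

theorem card_mul_sum_perm_apply (f : ι → ℝ) (i : ι) :
    (Fintype.card ι : ℝ) * ∑ π : Equiv.Perm ι, f (π i) =
      (Fintype.card ι).factorial * ∑ j, f j := by
  have hconst : ∀ k, ∑ π : Equiv.Perm ι, f (π k) = ∑ π : Equiv.Perm ι, f (π i) := fun k =>
    Fintype.sum_equiv (Equiv.mulRight (Equiv.swap i k)) _ _ fun π => by simp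
  calc (Fintype.card ι : ℝ) * ∑ π : Equiv.Perm ι, f (π i)
      = ∑ k, ∑ π : Equiv.Perm ι, f (π k) := by simp [hconst]
    _ = ∑ π : Equiv.Perm ι, ∑ k, f (π k) := Finset.sum_comm
    _ = (Fintype.card ι).factorial * ∑ j, f j := by
        simp [Equiv.sum_comp, Fintype.card_perm]

theorem card_mul_sum_perm_apply_mul_apply_le (f g : ι → ℝ) (hf : ∀ j, 0 ≤ f j)
    (hg : ∀ j, 0 ≤ g j) {i k : ι} (hik : i ≠ k) :
    (Fintype.card ι : ℝ) * ((Fintype.card ι - 1) * ∑ π : Equiv.Perm ι, f (π i) * g (π k)) ≤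
      (Fintype.card ι).factorial * ((∑ j, f j) * ∑ j, g j) := by
  have hconst : ∀ l ∈ univ.erase i, ∑ π : Equiv.Perm ι, f (π i) * g (π l) =
      ∑ π : Equiv.Perm ι, f (π i) * g (π k) := fun l hl =>
    Fintype.sum_equiv (Equiv.mulRight (Equiv.swap k l)) _ _ fun π => by
      simp [Equiv.swap_apply_of_ne_of_ne hik (Finset.ne_of_mem_erase hl).symm]
  have hcard : ((univ.erase i).card : ℝ) = Fintype.card ι - 1 := by
    rw [Finset.card_erase_of_mem (mem_univ i), Finset.card_univ,
      Nat.cast_pred (Fintype.card_pos_iff.2 ⟨i⟩)]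
  have hle : (Fintype.card ι - 1) * ∑ π : Equiv.Perm ι, f (π i) * g (π k) ≤
      (∑ π : Equiv.Perm ι, f (π i)) * ∑ j, g j := by
    calc (Fintype.card ι - 1) * ∑ π : Equiv.Perm ι, f (π i) * g (π k)
        = ∑ l ∈ univ.erase i, ∑ π : Equiv.Perm ι, f (π i) * g (π l) := by
          rw [Finset.sum_congr rfl hconst, Finset.sum_const, nsmul_eq_mul, hcard]
      _ ≤ ∑ l, ∑ π : Equiv.Perm ι, f (π i) * g (π l) :=
          Finset.sum_le_univ_sum_of_nonneg fun l =>
            Finset.sum_nonneg fun π _ => mul_nonneg (hf _) (hg _)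
      _ = (∑ π : Equiv.Perm ι, f (π i)) * ∑ j, g j := by
          rw [Finset.sum_comm, Finset.sum_mul]
          refine Finset.sum_congr rfl fun π _ => ?_
          rw [← Finset.mul_sum, Equiv.sum_comp π g]
  calc _ ≤ (Fintype.card ι : ℝ) * ((∑ π : Equiv.Perm ι, f (π i)) * ∑ j, g j) := by gcongr
    _ = _ := by rw [← mul_assoc, card_mul_sum_perm_apply, mul_assoc]

end PermAverage

theorem le_sum_perm_of_zero_or_one {ι : Type*} [Fintype ι] [DecidableEq ι] [Nonempty ι]
    (T : ι → ι → ℝ) (hT : ∀ i j, T i j = 0 ∨ T i j = 1)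
    (hlow : (Fintype.card ι : ℝ) / 2 ≤ ∑ i, ∑ j, T i j)
    (hupp : ∑ i, ∑ j, T i j ≤ 2 * Fintype.card ι) :
    ((Fintype.card ι).factorial : ℝ) / 10 ≤
      ∑ π : Equiv.Perm ι, (2 / 5 * ∑ i, T i (π i) - (∑ i, T i (π i)) ^ 2 / 25) := by
  have hT0 : ∀ i j, 0 ≤ T i j := fun i j => by rcases hT i j with h | h <;> simp [h]
  have hTT : ∀ i j, T i j * T i j = T i j := fun i j => by rcases hT i j with h | h <;> simp [h]
  set n : ℝ := (Fintype.card ι : ℝ) with hn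
  set F : ℝ := ((Fintype.card ι).factorial : ℝ) with hF
  have hn0 : 0 < n := by rw [hn]; exact_mod_cast Fintype.card_pos
  have hF0 : 0 < F := by rw [hF]; exact_mod_cast Nat.factorial_pos _
  set q : ι → ℝ := fun i => (∑ j, T i j) / n with hq
  have hsum : ∀ i, ∑ j, T i j = n * q i := fun i => by simp only [hq]; field_simp
  have hq0 : ∀ i, 0 ≤ q i := fun i => div_nonneg (Finset.sum_nonneg fun j _ => hT0 i j) hn0.le
  have hfirst : ∀ i, ∑ π : Equiv.Perm ι, T i (π i) = F * q i := fun i => by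
    have h := card_mul_sum_perm_apply (T i) i
    rw [hsum] at h
    exact mul_left_cancel₀ hn0.ne' (h.trans (by ring))
  have hsecond : ∀ i k, ∑ π : Equiv.Perm ι, T i (π i) * T k (π k) ≤
      F * ((if i = k then q i else 0) + 2 * (q i * q k)) := fun i k => by
    have hqq : 0 ≤ q i * q k := mul_nonneg (hq0 i) (hq0 k)
    by_cases hik : i = k
    · subst hik
      simp only [hTT, hfirst, if_true]
      gcongr
      linarith
    · have h := card_mul_sum_perm_apply_mul_apply_le (T i) (T k) (hT0 i) (hT0 k) hik
      rw [hsum, hsum] at h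
      have hn2 : 2 ≤ n := by
        rw [hn]
        exact_mod_cast Fintype.one_lt_card_iff.2 ⟨i, k, hik⟩
      simp only [if_neg hik, zero_add]
      have h' : (n - 1) * ∑ π : Equiv.Perm ι, T i (π i) * T k (π k) ≤
          F * (n * (q i * q k)) :=
        le_of_mul_le_mul_left (h.trans_eq (by ring)) hn0
      have h'' : F * (n * (q i * q k)) ≤ (n - 1) * (F * (2 * (q i * q k))) := by
        nlinarith [mul_nonneg (mul_nonneg hF0.le hqq) (sub_nonneg.2 hn2)]
      exact le_of_mul_le_mul_left (h'.trans h'') (by linarith)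
  set S : ℝ := ∑ i, q i with hS
  have hST : ∑ i, ∑ j, T i j = n * S := by simp only [hsum, hS, Finset.mul_sum]
  have hN : ∑ π : Equiv.Perm ι, ∑ i, T i (π i) = F * S := by
    rw [Finset.sum_comm, hS, Finset.mul_sum]
    exact Finset.sum_congr rfl fun i _ => hfirst i
  have hN2 : ∑ π : Equiv.Perm ι, (∑ i, T i (π i)) ^ 2 ≤ F * (S + 2 * S ^ 2) := by
    calc ∑ π : Equiv.Perm ι, (∑ i, T i (π i)) ^ 2
        = ∑ i, ∑ k, ∑ π : Equiv.Perm ι, T i (π i) * T k (π k) := by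
          simp only [sq, Finset.sum_mul_sum]
          rw [Finset.sum_comm]
          exact Finset.sum_congr rfl fun i _ => Finset.sum_comm
      _ ≤ ∑ i, ∑ k, F * ((if i = k then q i else 0) + 2 * (q i * q k)) :=
          Finset.sum_le_sum fun i _ => Finset.sum_le_sum fun k _ => hsecond i k
      _ = F * (S + 2 * S ^ 2) := by
          simp only [← Finset.mul_sum, Finset.sum_add_distrib, Finset.sum_ite_eq, mem_univ,
            if_true]
          rw [← hS, ← Finset.sum_mul, ← hS, sq]
  have hS1 : 1 / 2 ≤ S := by
    rw [hST] at hlow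
    exact le_of_mul_le_mul_left (by linarith) hn0
  have hS2 : S ≤ 2 := by
    rw [hST] at hupp
    exact le_of_mul_le_mul_left (by linarith) hn0
  rw [Finset.sum_sub_distrib, ← Finset.mul_sum, ← Finset.sum_div, hN]
  have h1 : 1 / 10 ≤ 2 / 5 * S - (S + 2 * S ^ 2) / 25 := by nlinarith
  nlinarith [mul_le_mul_of_nonneg_left h1 hF0.le]

theorem sum_ite_add_one_le_eq (n : ℕ) {v : ℝ} (hv : 0 ≤ v) :
    ∑ j : Fin n, (if ((j : ℕ) : ℝ) + 1 ≤ v then (1 : ℝ) else 0) = min (n : ℝ) ⌊v⌋₊ := by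
  rw [Fin.sum_univ_eq_sum_range (fun j : ℕ => if (j : ℝ) + 1 ≤ v then (1 : ℝ) else 0),
    Finset.sum_boole]
  have : (range n).filter (fun j : ℕ => (j : ℝ) + 1 ≤ v) = range (min n ⌊v⌋₊) := by
    ext j
    have h : (j : ℝ) + 1 ≤ v ↔ j + 1 ≤ ⌊v⌋₊ := by rw [Nat.le_floor_iff hv]; push_cast; rfl
    simp only [mem_filter, mem_range, h, lt_min_iff, Nat.succ_le_iff]
  rw [this, card_range, Nat.cast_min]

theorem le_sum_perm_sqrt {p : ℝ} (hp1 : 1 < p) {n : ℕ} (hn : 0 < n) (y : Fin n → ℝ)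
    (hy : ∀ i, 0 ≤ y i) (hsum : ∑ i, y i ^ p = 1) :
    (n.factorial : ℝ) / 20 ≤ ∑ π : Equiv.Perm (Fin n),
      √(∑ i, (y i * ((n : ℝ) / ((π i : ℕ) + 1)) ^ (1 / p)) ^ 2) := by
  have hp0 : 0 < p := by linarith
  have : Nonempty (Fin n) := ⟨⟨0, hn⟩⟩
  have hn0 : (0 : ℝ) < n := by exact_mod_cast hn
  have hyp : ∀ i, 0 ≤ y i ^ p := fun i => Real.rpow_nonneg (hy i) p
  have hyp1 : ∀ i, y i ^ p ≤ 1 := fun i => hsum ▸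
    Finset.single_le_sum (f := fun i => y i ^ p) (fun i _ => hyp i) (mem_univ i)
  set T : Fin n → Fin n → ℝ :=
    fun i j => if ((j : ℕ) : ℝ) + 1 ≤ 2 * (n * y i ^ p) then 1 else 0 with hT
  have hT01 : ∀ i j, T i j = 0 ∨ T i j = 1 := fun i j => by
    simp only [hT]; split_ifs <;> simp
  have hTsum : ∀ i, ∑ j, T i j = min (n : ℝ) ⌊2 * (n * y i ^ p)⌋₊ := fun i =>
    sum_ite_add_one_le_eq n (by have := hyp i; positivity)
  have hlow : (n : ℝ) / 2 ≤ ∑ i, ∑ j, T i j := by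
    have h : ∀ i, n * y i ^ p - 1 / 2 ≤ ∑ j, T i j := fun i => by
      rw [hTsum]
      refine le_min (by nlinarith [hyp1 i]) ?_
      rcases le_total (n * y i ^ p) (1 / 2) with h | h
      · exact (sub_nonpos.2 h).trans (Nat.cast_nonneg _)
      · linarith [Nat.lt_floor_add_one (2 * (n * y i ^ p))]
    calc (n : ℝ) / 2 = ∑ i, (n * y i ^ p - 1 / 2) := by
          rw [Finset.sum_sub_distrib, ← Finset.mul_sum, hsum]
          simp
          ring
      _ ≤ _ := Finset.sum_le_sum fun i _ => h i
  have hupp : ∑ i, ∑ j, T i j ≤ 2 * n := by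
    calc ∑ i, ∑ j, T i j ≤ ∑ i, 2 * (n * y i ^ p) := Finset.sum_le_sum fun i _ => by
          rw [hTsum]
          exact (min_le_right _ _).trans (Nat.floor_le (by have := hyp i; positivity))
      _ = 2 * n := by rw [← Finset.mul_sum, ← Finset.mul_sum, hsum, mul_one]
  have hmain := le_sum_perm_of_zero_or_one T hT01 (by simpa using hlow) (by simpa using hupp)
  rw [Fintype.card_fin] at hmain
  have hpoint : ∀ π : Equiv.Perm (Fin n),
      1 / 2 * (2 / 5 * ∑ i, T i (π i) - (∑ i, T i (π i)) ^ 2 / 25) ≤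
        √(∑ i, (y i * ((n : ℝ) / ((π i : ℕ) + 1)) ^ (1 / p)) ^ 2) := fun π => by
    by_cases h : ∃ i, T i (π i) = 1
    · obtain ⟨i, hi⟩ := h
      have hi' : ((π i : ℕ) : ℝ) + 1 ≤ 2 * (n * y i ^ p) := by
        by_contra hlt
        simp [hT, hlt] at hi
      have hone : 1 / 2 ≤ y i * ((n : ℝ) / ((π i : ℕ) + 1)) ^ (1 / p) := by
        have hyi : y i = (y i ^ p) ^ (1 / p) := by
          rw [← Real.rpow_mul (hy i), mul_one_div_cancel hp0.ne', Real.rpow_one]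
        rw [hyi, ← Real.mul_rpow (hyp i) (by positivity)]
        calc (1 / 2 : ℝ) = (1 / 2 : ℝ) ^ (1 : ℝ) := (Real.rpow_one _).symm
          _ ≤ (1 / 2 : ℝ) ^ (1 / p) := Real.rpow_le_rpow_of_exponent_ge (by norm_num)
              (by norm_num) (by rw [div_le_one hp0]; exact hp1.le)
          _ ≤ _ := by
              refine Real.rpow_le_rpow (by norm_num) ?_ (by positivity)
              rw [mul_div_assoc', le_div_iff₀ (by positivity)]
              linarith
      calc _ ≤ (1 / 2 : ℝ) := by nlinarith [sq_nonneg ((∑ i, T i (π i)) / 5 - 1)]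
        _ ≤ _ := hone
        _ ≤ _ := Real.le_sqrt_of_sq_le (Finset.single_le_sum
            (f := fun i => (y i * ((n : ℝ) / ((π i : ℕ) + 1)) ^ (1 / p)) ^ 2)
            (fun i _ => sq_nonneg _) (mem_univ i))
    · push Not at h
      have h0 : ∀ i, T i (π i) = 0 := fun i => (hT01 i (π i)).resolve_right (h i)
      simp [h0]
  refine le_trans ?_ (Finset.sum_le_sum fun π _ => hpoint π)
  rw [← Finset.mul_sum]
  linarith

theorem exists_sum_perm_sqrt_le {p : ℝ} (hp1 : 1 < p) (hp2 : p < 2) :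
    ∃ C : ℝ, 0 < C ∧ ∀ (n : ℕ) (y : Fin n → ℝ), (∀ i, 0 ≤ y i) → ∑ i, y i ^ p = 1 →
      ∑ π : Equiv.Perm (Fin n), √(∑ i, (y i * ((n : ℝ) / ((π i : ℕ) + 1)) ^ (1 / p)) ^ 2) ≤
        C * n.factorial := by
  have hp0 : 0 < p := by linarith
  obtain ⟨C, hC, hbound⟩ := exists_sum_min_rpow_le hp1 hp2
  refine ⟨1 + C, by positivity, fun n y hy hsum => ?_⟩
  have hyp : ∀ i, 0 ≤ y i ^ p := fun i => Real.rpow_nonneg (hy i) p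
  set φ : ℝ → ℝ := fun t => min t (t ^ 2) with hφ
  have hz : ∀ i (j : Fin n), y i * ((n : ℝ) / ((j : ℕ) + 1)) ^ (1 / p) =
      (n * y i ^ p / ((j : ℕ) + 1)) ^ (1 / p) := fun i j => by
    have hyi : y i = (y i ^ p) ^ (1 / p) := by
      rw [← Real.rpow_mul (hy i), mul_one_div_cancel hp0.ne', Real.rpow_one]
    conv_lhs => rw [hyi]
    rw [← Real.mul_rpow (hyp i) (by positivity)]
    congr 1
    ring
  have havg : ∀ i, ∑ π : Equiv.Perm (Fin n),
      φ (y i * ((n : ℝ) / ((π i : ℕ) + 1)) ^ (1 / p)) ≤ n.factorial * (C * y i ^ p) := fun i => by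
    have hn0 : (0 : ℝ) < n := by exact_mod_cast i.pos
    have h := card_mul_sum_perm_apply
      (fun j : Fin n => φ (y i * ((n : ℝ) / ((j : ℕ) + 1)) ^ (1 / p))) i
    rw [Fintype.card_fin] at h
    refine le_of_mul_le_mul_left (h.le.trans ?_) hn0
    have hb := hbound n (n * y i ^ p) (mul_nonneg hn0.le (hyp i))
    simp only [hz, hφ]
    exact (mul_le_mul_of_nonneg_left hb (Nat.cast_nonneg _)).trans_eq (by ring)
  calc _ ≤ ∑ π : Equiv.Perm (Fin n),
        (1 + ∑ i, φ (y i * ((n : ℝ) / ((π i : ℕ) + 1)) ^ (1 / p))) :=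
        Finset.sum_le_sum fun π _ => sqrt_sum_sq_le_one_add_sum_min _ _ fun i =>
          mul_nonneg (hy i) (by positivity)
    _ = n.factorial + ∑ i, ∑ π : Equiv.Perm (Fin n),
          φ (y i * ((n : ℝ) / ((π i : ℕ) + 1)) ^ (1 / p)) := by
        rw [Finset.sum_add_distrib, Finset.sum_comm]
        simp [Fintype.card_perm]
    _ ≤ n.factorial + ∑ i, n.factorial * (C * y i ^ p) := by
        gcongr with i
        exact havg i
    _ = (1 + C) * n.factorial := by
        rw [← Finset.mul_sum, ← Finset.mul_sum, hsum]
        ring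

theorem stmt_14 (p : ℝ) (hp1 : 1 < p) (hp2 : p < 2) :
    ∃ c₁ c₂ : ℝ, 0 < c₁ ∧ 0 < c₂ ∧
      ∀ (n : ℕ) (a : Fin n → ℝ),
        (∀ i : Fin n, a i = ((n : ℝ) / ((i : ℕ) + 1)) ^ (1 / p)) →
      ∀ (x : Fin n → ℝ),
        c₁ * (∑ i, |x i| ^ p) ^ (1 / p) ≤
          (1 / (n.factorial : ℝ)) * ∑ π : Equiv.Perm (Fin n),
            (∑ i, |x i * a (π i)| ^ (2 : ℝ)) ^ ((1 : ℝ) / 2) ∧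
        (1 / (n.factorial : ℝ)) * ∑ π : Equiv.Perm (Fin n),
            (∑ i, |x i * a (π i)| ^ (2 : ℝ)) ^ ((1 : ℝ) / 2) ≤
          c₂ * (∑ i, |x i| ^ p) ^ (1 / p) := by
  have hp0 : 0 < p := by linarith
  obtain ⟨C, hC, hupp⟩ := exists_sum_perm_sqrt_le hp1 hp2
  refine ⟨1 / 20, C, by norm_num, hC, fun n a ha x => ?_⟩
  have hxp : ∀ i, 0 ≤ |x i| ^ p := fun i => by positivity
  have hR : 0 ≤ ∑ i, |x i| ^ p := Finset.sum_nonneg fun i _ => hxp i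
  rcases hR.eq_or_lt with hR0 | hR0
  · have hx : ∀ i, x i = 0 := fun i => by
      have h := (Finset.sum_eq_zero_iff_of_nonneg fun i _ => hxp i).1 hR0.symm i (mem_univ i)
      exact abs_eq_zero.1 ((Real.rpow_eq_zero (abs_nonneg _) hp0.ne').1 h)
    simp [hx, hp0.ne']
  have hn : 0 < n := by
    rcases Nat.eq_zero_or_pos n with rfl | h
    · simp at hR0
    · exact h
  set M : ℝ := (∑ i, |x i| ^ p) ^ (1 / p) with hM
  have hM0 : 0 < M := Real.rpow_pos_of_pos hR0 _
  have hMp : M ^ p = ∑ i, |x i| ^ p := by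
    rw [hM, ← Real.rpow_mul hR, one_div_mul_cancel hp0.ne', Real.rpow_one]
  set y : Fin n → ℝ := fun i => |x i| / M with hy
  have hy0 : ∀ i, 0 ≤ y i := fun i => by positivity
  have hsum : ∑ i, y i ^ p = 1 := by
    simp only [hy, Real.div_rpow (abs_nonneg _) hM0.le, ← Finset.sum_div]
    rw [hMp, div_self hR0.ne']
  have hscale : ∀ π : Equiv.Perm (Fin n),
      (∑ i, |x i * a (π i)| ^ (2 : ℝ)) ^ ((1 : ℝ) / 2) =
        M * √(∑ i, (y i * ((n : ℝ) / ((π i : ℕ) + 1)) ^ (1 / p)) ^ 2) := fun π => by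
    have h : ∑ i, |x i * a (π i)| ^ (2 : ℝ) =
        M ^ 2 * ∑ i, (y i * ((n : ℝ) / ((π i : ℕ) + 1)) ^ (1 / p)) ^ 2 := by
      rw [Finset.mul_sum]
      refine Finset.sum_congr rfl fun i _ => ?_
      rw [Real.rpow_two, sq_abs, ha, mul_pow, mul_pow, ← sq_abs (x i)]
      simp only [hy]
      field_simp
    rw [← Real.sqrt_eq_rpow, h, Real.sqrt_mul (sq_nonneg M), Real.sqrt_sq hM0.le]
  have hF : (0 : ℝ) < n.factorial := by exact_mod_cast n.factorial_pos
  simp only [hscale, ← Finset.mul_sum]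
  have h1 := mul_le_mul_of_nonneg_left (le_sum_perm_sqrt hp1 hn y hy0 hsum) hM0.le
  have h2 := mul_le_mul_of_nonneg_left (hupp n y hy0 hsum) hM0.le
  rw [one_div_mul_eq_div (n.factorial : ℝ), le_div_iff₀ hF, div_le_iff₀ hF]
  constructor <;> linarith
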